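/- arXiv:math/0204096 — 2 statements merged into one kernel-verified Lean document; each statement's English description precedes it below -/
import Mathlib

section
/- Let $r$, $b$, $m$ be positive integers with $\gcd(b,r)=1$ and $r \ge 2m$. Then $\frac{\overline{(r-m)} \cdot \overline{bm} \cdot \overline{(r-bm)}}{6r} \ge \frac{r-1}{12}$, where for an integer $a$, $\bar{a}$ denotes the least nonnegative residue of $a$ modulo $r$. -/
/-!
Write `s` for the residue of `b m` modulo `r`. Coprimality of `b` and `r` together with `0 < m < r`
gives `s ≠ 0`, so the three residues are `r - m`, `s` and `r - s` with `1 ≤ s ≤ r - 1`. Then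
`s (r - s) ≥ r - 1` by concavity in `s`, and `r - m ≥ r / 2` because `2 m ≤ r`; multiplying the two
bounds gives `(r - m) s (r - s) ≥ r (r - 1) / 2`.
-/

/-- Case `r ≥ 2m` of Section 3.2: the residue product bound
`overline(r-m) * overline(bm) * overline(r-bm) / (6r) ≥ (r-1)/12`. -/
theorem residue_triple_product_ge_of_two_mul_le (r b m : ℕ) (hr : 0 < r) (hb : 0 < b)
    (hm : 0 < m) (hgcd : Nat.gcd b r = 1) (h2m : 2 * m ≤ r) :
    ((r : ℝ) - 1) / 12 ≤
      (((((r : ℤ) - m) % r) * ((b * m : ℤ) % r) * (((r : ℤ) - b * m) % r) : ℤ) : ℝ)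
        / (6 * r) := by
  have h1 : ((r : ℤ) - m) % r = r - m := Int.emod_eq_of_lt (by omega) (by omega)
  have hndvd : ¬ (r : ℤ) ∣ (b * m : ℤ) := by
    intro h
    have h' : r ∣ b * m := by exact_mod_cast h
    have hrm : r ∣ m := (Nat.Coprime.symm hgcd).dvd_of_dvd_mul_left h'
    have := Nat.le_of_dvd hm hrm
    omega
  have hs0 : 0 ≤ (b * m : ℤ) % r := Int.emod_nonneg _ (by omega)
  have hsr : (b * m : ℤ) % r < r := Int.emod_lt_of_pos _ (by omega)
  have hs1 : (b * m : ℤ) % r ≠ 0 := fun h => hndvd (Int.dvd_of_emod_eq_zero h)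
  have h2 : ((r : ℤ) - b * m) % r = r - (b * m : ℤ) % r := by
    rw [← Int.sub_emod_emod]
    exact Int.emod_eq_of_lt (by omega) (by omega)
  rw [h1, h2]
  generalize (b * m : ℤ) % r = s at *
  -- The two factors `s - 1` and `r - s - 1` are nonnegative, and their product is `s (r - s) - (r - 1)`.
  have hprod : (r : ℤ) - 1 ≤ s * (r - s) := by
    have : 0 ≤ (s - 1) * ((r : ℤ) - s - 1) := mul_nonneg (by omega) (by omega)
    linarith
  have key : (r : ℤ) * (r - 1) ≤ 2 * ((r - m) * s * (r - s)) := by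
    calc (r : ℤ) * (r - 1) ≤ (2 * (r - m)) * (s * (r - s)) :=
          mul_le_mul (by omega) hprod (by omega) (by omega)
      _ = 2 * ((r - m) * s * (r - s)) := by ring
  have keyR : (r : ℝ) * (r - 1) ≤ 2 * (((r - m) * s * (r - s) : ℤ) : ℝ) := by
    exact_mod_cast key
  have hrR : (0 : ℝ) < r := by exact_mod_cast hr
  rw [div_le_div_iff₀ (by norm_num) (by positivity)]
  linarith
end

section
/- Let $r$, $b$, $m$ be positive integers with $\gcd(b,r)=1$. Suppose that for every integer $m'$ with $m \le m' \le 2m$ one has $\overline{(r-m')} \cdot \overline{bm'} \cdot \overline{(r-bm')} \le 6r \cdot 18^3$, where for an integer $a$, $\bar{a}$ denotes the least nonnegative residue of $a$ modulo $r$. Then $r \le 2^9 \cdot 3^7$. -/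
/-!
Some `m'` in `[m, 2m]` has residue `s` modulo `r` with `1 ≤ s ≤ r / 2`: take `m' = m` if
`2 * m ≤ r`, and otherwise some `m' ≡ 1` modulo `r`, which the interval then contains. For this `m'`
the first factor is `r - s ≥ r / 2`, while the other two are `x` and `r - x` with `0 < x < r` by
coprimality, so their product is at least `r - 1`. Hence `(r / 2) * (r - 1) ≤ 6 * r * 18 ^ 3`, which
gives `r ≤ 12 * 18 ^ 3 + 1`, well below the claimed bound.
-/

/-- The interval `[m, 2m]` contains an integer whose residue modulo `r` lies in `[1, r / 2]`. -/
lemma exists_small_residue (r m : ℕ) (hr : 2 ≤ r) (hm : 0 < m) :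
    ∃ k s : ℕ, m ≤ r * k + s ∧ r * k + s ≤ 2 * m ∧ 1 ≤ s ∧ 2 * s ≤ r := by
  by_cases h : 2 * m ≤ r
  · exact ⟨0, m, by omega, by omega, hm, h⟩
  by_cases h' : m ≤ r
  · exact ⟨1, 1, by omega, by omega, le_rfl, hr⟩
  · have h1 := Nat.div_add_mod m r
    have h2 := Nat.mod_lt m (by omega : 0 < r)
    exact ⟨m / r + 1, 1, by rw [mul_add]; omega, by rw [mul_add]; omega, le_rfl, hr⟩

/-- Section 3.2 conclusion: if all residue triple products for `m' ∈ [m, 2m]` are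
bounded by `6 r · 18³`, then `r ≤ 2⁹ · 3⁷`. -/
theorem index_bound (r b m : ℕ) (hr : 0 < r) (hb : 0 < b) (hm : 0 < m)
    (hgcd : Nat.gcd b r = 1)
    (H : ∀ m' : ℕ, m ≤ m' → m' ≤ 2 * m →
      (((r : ℤ) - m') % r) * ((b * m' : ℤ) % r) * (((r : ℤ) - b * m') % r)
        ≤ 6 * r * 18 ^ 3) :
    r ≤ 2 ^ 9 * 3 ^ 7 := by
  by_contra! hbig
  obtain ⟨k, s, h1, h2, hs1, hs2⟩ := exists_small_residue r m (by omega) hm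
  have hH := H _ h1 h2
  have hr0 : (0 : ℤ) < r := by exact_mod_cast hr
  have e1 : ((r : ℤ) - (r * k + s : ℕ)) % r = r - s := by
    have : (r : ℤ) - (r * k + s : ℕ) = (r - s) + r * (-k) := by push_cast; ring
    rw [this, Int.add_mul_emod_self_left, Int.emod_eq_of_lt] <;> omega
  set x : ℤ := (b * (r * k + s : ℕ) : ℤ) % r with hx
  have hx0 : 0 ≤ x := Int.emod_nonneg _ hr0.ne'
  have hxr : x < r := Int.emod_lt_of_pos _ hr0
  have hxne : x ≠ 0 := by
    intro h
    have hd : (r : ℤ) ∣ b * (r * k + s : ℕ) := Int.dvd_of_emod_eq_zero h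
    have hd' : r ∣ b * (r * k + s) := by exact_mod_cast hd
    have hd2 : r ∣ r * k + s := (Nat.Coprime.symm hgcd).dvd_of_dvd_mul_left hd'
    have hd3 : r ∣ s := (Nat.dvd_add_right (Dvd.intro _ rfl)).1 hd2
    have := Nat.le_of_dvd (by omega) hd3
    omega
  have e2 : ((r : ℤ) - b * (r * k + s : ℕ)) % r = r - x := by
    have hdiv := Int.emod_add_mul_ediv (b * (r * k + s : ℕ) : ℤ) r
    have : (r : ℤ) - b * (r * k + s : ℕ)
        = (r - x) + r * (-((b * (r * k + s : ℕ) : ℤ) / r)) := by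
      rw [hx]; linarith
    rw [this, Int.add_mul_emod_self_left, Int.emod_eq_of_lt] <;> omega
  rw [e1, e2] at hH
  have hx1 : 1 ≤ x := by omega
  have hprod : (r : ℤ) - 1 ≤ x * (r - x) := by
    nlinarith [mul_nonneg (sub_nonneg.2 hx1) (by omega : (0 : ℤ) ≤ r - x - 1)]
  have hs : (r : ℤ) ≤ 2 * (r - s) := by omega
  have hR : (1119744 : ℤ) < r := by norm_num at hbig; exact_mod_cast hbig
  have key : (r : ℤ) * (r - 1) ≤ 2 * (r - s) * (x * (r - x)) :=
    mul_le_mul hs hprod (by omega) (by omega)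
  nlinarith
end
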